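/- Let G be a chordal graph and let H be a Helly graph such that G is an isometric subgraph of H and every peripheral vertex of H belongs to V(G). Then H is chordal. -/

import Mathlib

open SimpleGraph

/-- The metric interval `I_H(x,y)`: vertices on shortest `(x,y)`-paths. -/
def interval {V : Type*} (H : SimpleGraph V) (x y : V) : Set V :=
  {v | H.dist x v + H.dist v y = H.dist x y}

/-- A vertex `x` of `H` is peripheral if there is a vertex `y` such that for every
vertex `z ≠ x`, the interval `I_H(y,x)` is not a proper subset of `I_H(y,z)`. -/
def Peripheral {V : Type*} (H : SimpleGraph V) (x : V) : Prop :=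
  ∃ y : V, ∀ z : V, z ≠ x → ¬ interval H y x ⊂ interval H y z

/-- A graph is Helly if every family of pairwise intersecting disks has a common vertex. -/
def HellyGraph {V : Type*} (G : SimpleGraph V) : Prop :=
  ∀ (S : Set V) (r : V → ℕ),
    (∀ u ∈ S, ∀ v ∈ S, ∃ w, G.dist u w ≤ r u ∧ G.dist v w ≤ r v) →
    ∃ c, ∀ v ∈ S, G.dist v c ≤ r v

/-- `G` contains the cycle `C_n` as an induced subgraph. -/
def HasInducedCycle {V : Type*} (G : SimpleGraph V) (n : ℕ) : Prop :=
  ∃ f : Fin n → V, Function.Injective f ∧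
    ∀ i j, (cycleGraph n).Adj i j ↔ G.Adj (f i) (f j)

/-- `G` is chordal: it has no induced cycle of length at least 4. -/
def Chordal {V : Type*} (G : SimpleGraph V) : Prop :=
  ∀ n, 4 ≤ n → ¬ HasInducedCycle G n

/-
A finite graph is chordal exactly when it has a perfect elimination ordering (Dirac; Fulkerson and
Gross). Let `ρ` be one for `G`. For a vertex `x` of `H`, take the latest vertex of each disk of `G`
centred at `v` with radius `d_H(x, v)`, and let `m x` be the earliest of these. Then `ρ ∘ m` is a
perfect elimination ordering of `H`: if `y` and `z` are later neighbours of `x`, a geodesic from `y`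
to `z` extends to one between peripheral vertices `p` and `q`, which lie in `G`. The disks of `G`
around `p` and `q` with radii `d_H(y, p)` and `d_H(z, q)` both meet the clique formed by `m x` and
its later neighbours, so `d_H(p, q) ≤ d_H(p, y) + 1 + d_H(z, q)`, that is, `d_H(y, z) ≤ 1`.
-/

section

variable {V W α : Type*} {G : SimpleGraph V}

theorem connected_induce_insert {C : Set V} {c v : V} (hC : (G.induce C).Connected) (hc : c ∈ C)
    (hcv : G.Adj c v) : (G.induce (insert v C)).Connected := by
  rw [← Set.union_singleton]
  exact connected_induce_union hC.preconnected .of_subsingleton hc rfl hcv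

theorem dist_getVert_getVert_of_length_eq_dist {u v : V} (p : G.Walk u v)
    (hp : p.length = G.dist u v) {i j : ℕ} (hij : i ≤ j) (hj : j ≤ p.length) :
    G.dist (p.getVert i) (p.getVert j) = j - i := by
  have hsub : ((p.take j).drop i).IsSubwalk p :=
    ((p.take j).isSubwalk_drop i).trans (p.isSubwalk_take j)
  have hlen := length_eq_dist_of_subwalk hp hsub
  rw [Walk.drop_length, Walk.take_length, p.take_getVert, min_eq_right hij, min_eq_left hj] at hlen
  exact hlen.symm

theorem exists_pathGraph_embedding_of_reachable {u v : V} (h : G.Reachable u v) :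
    ∃ φ : pathGraph (G.dist u v + 1) ↪g G, φ 0 = u ∧ φ (Fin.last _) = v := by
  obtain ⟨p, hp⟩ := h.exists_walk_length_eq_dist
  have hdist (i j : Fin (G.dist u v + 1)) (hij : i ≤ j) :
      G.dist (p.getVert i) (p.getVert j) = j - i :=
    dist_getVert_getVert_of_length_eq_dist p hp hij (by omega)
  refine ⟨⟨⟨fun i ↦ p.getVert i, fun i j hij ↦ ?_⟩, fun {i j} ↦ ?_⟩,
    p.getVert_zero, hp ▸ p.getVert_length⟩
  · simp only at hij
    rcases le_total i j with h | h <;>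
    · have := hdist _ _ h
      rw [hij, SimpleGraph.dist_self] at this
      omega
  · change G.Adj (p.getVert i) (p.getVert j) ↔ _
    rcases le_total i j with h | h
    · rw [← dist_eq_one_iff_adj, hdist _ _ h, pathGraph_adj]
      omega
    · rw [G.adj_comm, ← dist_eq_one_iff_adj, hdist _ _ h, pathGraph_adj]
      omega

theorem cycleGraph_adj_zero_succ {n : ℕ} {j : Fin (n + 1)} :
    (cycleGraph (n + 2)).Adj 0 j.succ ↔ j = 0 ∨ j = Fin.last n := by
  have hj : (0 - j.succ).val = n + 1 - j := by
    rw [zero_sub, Fin.val_neg, if_neg j.succ_ne_zero, Fin.val_succ]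
    omega
  rw [cycleGraph_adj', hj, sub_zero, Fin.val_succ, Fin.ext_iff, Fin.ext_iff, Fin.val_last,
    Fin.val_zero]
  omega

theorem cycleGraph_adj_succ_succ {n : ℕ} {i j : Fin (n + 1)} :
    (cycleGraph (n + 2)).Adj i.succ j.succ ↔ (pathGraph (n + 1)).Adj i j := by
  rcases eq_or_ne i j with rfl | hne
  · simp
  wlog hij : i < j generalizing i j
  · rw [SimpleGraph.adj_comm, this hne.symm (hne.lt_or_gt.resolve_left hij), SimpleGraph.adj_comm]
  have hij' := Fin.succ_lt_succ_iff.2 hij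
  rw [cycleGraph_adj', pathGraph_adj, Fin.sub_val_of_le hij'.le, Fin.coe_sub_iff_lt.2 hij',
    Fin.val_succ, Fin.val_succ]
  omega

theorem hasInducedCycle_of_pathGraph_embedding {n : ℕ} (φ : pathGraph (n + 1) ↪g G) {a : V}
    (ha : a ∉ Set.range φ) (hadj : ∀ i, G.Adj a (φ i) ↔ i = 0 ∨ i = Fin.last n) :
    HasInducedCycle G (n + 2) := by
  refine ⟨Fin.cons a φ, Fin.cons_injective_iff.2 ⟨ha, φ.injective⟩, fun i j ↦ ?_⟩
  cases i using Fin.cases with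
  | zero =>
    cases j using Fin.cases with
    | zero => simp
    | succ j => rw [cycleGraph_adj_zero_succ, Fin.cons_zero, Fin.cons_succ, hadj]
  | succ i =>
    cases j using Fin.cases with
    | zero =>
      rw [SimpleGraph.adj_comm, cycleGraph_adj_zero_succ, Fin.cons_zero, Fin.cons_succ,
        G.adj_comm, hadj]
    | succ j => rw [cycleGraph_adj_succ_succ, Fin.cons_succ, Fin.cons_succ, φ.map_adj_iff]

theorem hasInducedCycle_iff_nonempty_embedding {n : ℕ} :
    HasInducedCycle G n ↔ Nonempty (cycleGraph n ↪g G) :=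
  ⟨fun ⟨f, hf, hadj⟩ ↦ ⟨⟨f, hf⟩, (hadj _ _).symm⟩,
    fun ⟨φ⟩ ↦ ⟨φ, φ.injective, fun _ _ ↦ φ.map_adj_iff.symm⟩⟩

theorem Chordal.of_embedding {H : SimpleGraph W} (hH : Chordal H) (φ : G ↪g H) : Chordal G := by
  intro n hn hcycle
  obtain ⟨ψ⟩ := hasInducedCycle_iff_nonempty_embedding.1 hcycle
  exact hH n hn (hasInducedCycle_iff_nonempty_embedding.2 ⟨φ.comp ψ⟩)

/-- The vertices anticomplete to `C`: those outside `C` without a neighbour in `C`. -/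
def anticompleteSet (G : SimpleGraph V) (C : Set V) : Set V :=
  {r | ∀ c ∈ C, Gᶜ.Adj c r}

/- A shortest path from `p` to `q` through `C` would close up at `a` to an induced cycle. -/
theorem Chordal.adj_of_connected_induce (hG : Chordal G) {C : Set V}
    (hC : (G.induce C).Connected) {a : V} (ha : a ∈ anticompleteSet G C) {p q : V}
    (hap : G.Adj a p) (haq : G.Adj a q) (hp : ∃ c ∈ C, G.Adj c p) (hq : ∃ c ∈ C, G.Adj c q)
    (hpq : p ≠ q) : G.Adj p q := by
  by_contra hnpq
  obtain ⟨c, hc, hcp⟩ := hp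
  obtain ⟨d, hd, hdq⟩ := hq
  let T : Set V := insert q (insert p C)
  have hT : (G.induce T).Connected :=
    connected_induce_insert (connected_induce_insert hC hc hcp) (Set.mem_insert_of_mem _ hd) hdq
  let p' : T := ⟨p, by simp [T]⟩
  let q' : T := ⟨q, by simp [T]⟩
  obtain ⟨φ, hφ0, hφl⟩ := exists_pathGraph_embedding_of_reachable (hT p' q')
  have hdist : 2 ≤ (G.induce T).dist p' q' :=
    hT.one_lt_dist_of_ne_of_not_adj (by simpa [p', q'] using hpq) hnpq
  have hTa : ∀ t : T, G.Adj a t ↔ t = p' ∨ t = q' := by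
    rintro ⟨t, rfl | rfl | ht⟩
    · simp [haq, q']
    · simp [hap, p']
    · have hta := (G.compl_adj t a).1 (ha t ht)
      simp only [p', q', G.adj_comm a, hta.2, false_iff, not_or]
      exact ⟨fun h ↦ hta.2 ((show t = p from congrArg Subtype.val h) ▸ hap.symm),
        fun h ↦ hta.2 ((show t = q from congrArg Subtype.val h) ▸ haq.symm)⟩
  have haT : a ∉ T := by
    rintro (rfl | rfl | h)
    · exact haq.ne rfl
    · exact hap.ne rfl
    · exact (ha a h).ne rfl
  refine hG _ (by omega) (hasInducedCycle_of_pathGraph_embedding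
    ((Embedding.induce T).comp φ) (a := a) ?_ fun i ↦ ?_)
  · rintro ⟨i, rfl⟩
    exact haT (φ i).2
  · rw [← φ.injective.eq_iff, ← φ.injective.eq_iff, hφ0, hφl]
    exact hTa (φ i)

theorem exists_connected_induce_forall_anticompleteSet_adj [Finite V] {a b : V}
    (hab : Gᶜ.Adj a b) :
    ∃ C : Set V, (G.induce C).Connected ∧ (anticompleteSet G C).Nonempty ∧
      ∀ r ∈ anticompleteSet G C, ∀ s ∉ C, (∃ c ∈ C, G.Adj c s) → G.Adj r s := by
  obtain ⟨C, ⟨hC, hne⟩, hmax⟩ := Set.Finite.exists_maximal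
    (s := {C : Set V | (G.induce C).Connected ∧ (anticompleteSet G C).Nonempty}) (Set.toFinite _)
    ⟨{a}, by simp, b, by simpa [anticompleteSet] using hab⟩
  refine ⟨C, hC, hne, fun r hr s hs ⟨c, hc, hcs⟩ ↦ ?_⟩
  by_contra hrs
  have hsr : Gᶜ.Adj s r :=
    (G.compl_adj s r).2 ⟨fun h ↦ ((G.compl_adj c r).1 (hr c hc)).2 (h ▸ hcs), mt Adj.symm hrs⟩
  exact hs <| hmax ⟨connected_induce_insert hC hc hcs, r, Set.forall_mem_insert.2 ⟨hsr, hr⟩⟩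
    (Set.subset_insert s C) (Set.mem_insert s C)

/- Remove a maximal connected set `C` with its neighbourhood `S`: `S` is a clique completely joined
to the rest, so a simplicial vertex of the rest is simplicial in `G`. -/
theorem Chordal.exists_isClique_neighborSet [Finite V] [Nonempty V] (hG : Chordal G) :
    ∃ v, G.IsClique (G.neighborSet v) := by
  induction hn : Nat.card V using Nat.strong_induction_on generalizing V with
  | _ n ih
  subst hn
  by_cases hcomplete : ∀ a b, ¬ Gᶜ.Adj a b
  · refine ⟨Classical.arbitrary V, fun x _ y _ hxy ↦ ?_⟩
    simpa [hxy] using hcomplete x y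
  push Not at hcomplete
  obtain ⟨a, b, hab⟩ := hcomplete
  obtain ⟨C, hC, hR, hjoin⟩ := exists_connected_induce_forall_anticompleteSet_adj hab
  set R := anticompleteSet G C
  have hRC {x : V} (hx : x ∈ R) : x ∉ C := fun hxC ↦ (hx x hxC).ne rfl
  have : Nonempty R := hR.to_subtype
  have hcard : Nat.card R < Nat.card V := by
    obtain ⟨c, hc⟩ := hC.nonempty
    exact Finite.card_subtype_lt fun h : c ∈ R ↦ hRC h hc
  obtain ⟨⟨v, hv⟩, hvclique⟩ := ih _ hcard (hG.of_embedding (Embedding.induce R)) rfl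
  have hmem {x : V} (hx : G.Adj v x) : x ∈ R ∨ x ∉ C ∧ ∃ c ∈ C, G.Adj c x := by
    have hxC : x ∉ C := fun h ↦ ((G.compl_adj x v).1 (hv x h)).2 hx.symm
    by_contra! hcon
    exact hcon.1 fun c hc ↦ (G.compl_adj c x).2 ⟨fun h ↦ hxC (h ▸ hc), hcon.2 hxC c hc⟩
  refine ⟨v, fun x hx y hy hxy ↦ ?_⟩
  rcases hmem hx with hxR | ⟨hxC, hxS⟩ <;> rcases hmem hy with hyR | ⟨hyC, hyS⟩
  · exact hvclique (x := ⟨x, hxR⟩) hx (y := ⟨y, hyR⟩) hy (by simpa using hxy)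
  · exact hjoin x hxR y hyC hyS
  · exact (hjoin y hyR x hxC hxS).symm
  · exact hG.adj_of_connected_induce hC hv hx hy hxS hyS hxy

/-- The neighbours of `v` that come after `v` when vertices are ordered by `ρ`; neighbours of
equal rank are included. -/
def upperNeighborSet [LE α] (G : SimpleGraph V) (ρ : V → α) (v : V) : Set V :=
  {x | G.Adj v x ∧ ρ v ≤ ρ x}

/-- A perfect elimination ordering, encoded by a ranking `ρ` that need not be injective: the later
neighbours of every vertex form a clique. -/
def IsPerfectElimination [LE α] (G : SimpleGraph V) (ρ : V → α) : Prop :=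
  ∀ v, G.IsClique (upperNeighborSet G ρ v)

theorem exists_isPerfectElimination_of_induce_compl_singleton {v : V}
    (hv : G.IsClique (G.neighborSet v)) {ρ : ({v}ᶜ : Set V) → ℕ} (hinj : Function.Injective ρ)
    (hρ : IsPerfectElimination (G.induce {v}ᶜ) ρ) :
    ∃ ρ' : V → ℕ, Function.Injective ρ' ∧ IsPerfectElimination G ρ' := by
  classical
  let ρ' (x : V) : ℕ := if h : x = v then 0 else ρ ⟨x, h⟩ + 1
  have hρ'v : ρ' v = 0 := dif_pos rfl
  have hρ' {x : V} (hx : x ≠ v) : ρ' x = ρ ⟨x, hx⟩ + 1 := dif_neg hx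
  refine ⟨ρ', fun x y hxy ↦ ?_, fun u x hx y hy hxy ↦ ?_⟩
  · rcases eq_or_ne x v with hx | hx <;> rcases eq_or_ne y v with hy | hy
    · exact hx.trans hy.symm
    · rw [hx, hρ'v, hρ' hy] at hxy
      omega
    · rw [hy, hρ'v, hρ' hx] at hxy
      omega
    · rw [hρ' hx, hρ' hy] at hxy
      exact congrArg Subtype.val (hinj (Nat.succ_injective hxy))
  · rcases eq_or_ne u v with rfl | hu
    · exact hv hx.1 hy.1 hxy
    have hmem {w : V} (hw : w ∈ upperNeighborSet G ρ' u) :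
        ∃ h : w ≠ v, ⟨w, h⟩ ∈ upperNeighborSet (G.induce {v}ᶜ) ρ ⟨u, hu⟩ := by
      obtain ⟨huw, hle⟩ := hw
      rw [hρ' hu] at hle
      have hwv : w ≠ v := by
        rintro rfl
        omega
      rw [hρ' hwv] at hle
      exact ⟨hwv, huw, Nat.le_of_succ_le_succ hle⟩
    obtain ⟨_, hx'⟩ := hmem hx
    obtain ⟨_, hy'⟩ := hmem hy
    exact hρ _ hx' hy' (Subtype.coe_ne_coe.1 hxy)

theorem Chordal.exists_isPerfectElimination [Finite V] (hG : Chordal G) :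
    ∃ ρ : V → ℕ, Function.Injective ρ ∧ IsPerfectElimination G ρ := by
  induction hn : Nat.card V generalizing V with
  | zero =>
    have := (Nat.card_eq_zero.1 hn).resolve_right (not_infinite_iff_finite.2 ‹_›)
    exact ⟨fun _ ↦ 0, Function.injective_of_subsingleton _, isEmptyElim⟩
  | succ n ih =>
    have : Nonempty V := (Nat.card_pos_iff.1 (by omega)).1
    obtain ⟨v, hv⟩ := hG.exists_isClique_neighborSet
    have hcard : Nat.card ({v}ᶜ : Set V) = n := by
      rw [Nat.card_coe_set_eq, Set.ncard_compl, Set.ncard_singleton, hn, Nat.add_sub_cancel]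
    obtain ⟨ρ, hinj, hρ⟩ := ih (hG.of_embedding (Embedding.induce {v}ᶜ)) hcard
    exact exists_isPerfectElimination_of_induce_compl_singleton hv hinj hρ

theorem IsPerfectElimination.comp_embedding [LE α] {H : SimpleGraph W} {ρ : W → α}
    (hρ : IsPerfectElimination H ρ) (φ : G ↪g H) : IsPerfectElimination G (ρ ∘ φ) :=
  fun v _ hx _ hy hxy ↦
    φ.map_adj_iff.1 <| hρ (φ v) ⟨φ.map_adj_iff.2 hx.1, hx.2⟩ ⟨φ.map_adj_iff.2 hy.1, hy.2⟩
      (φ.injective.ne hxy)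

theorem not_isPerfectElimination_cycleGraph [LinearOrder α] {n : ℕ} (hn : 4 ≤ n) (ρ : Fin n → α) :
    ¬ IsPerfectElimination (cycleGraph n) ρ := by
  intro hρ
  obtain ⟨n, rfl⟩ : ∃ m, n = m + 4 := ⟨n - 4, by omega⟩
  obtain ⟨i, hi⟩ := Finite.exists_min ρ
  have htwo : (i + 1) - (i - 1) = 1 + 1 := by abel
  have hne : i + 1 ≠ i - 1 := by
    rw [← sub_ne_zero, htwo]
    simp [Fin.ext_iff, Fin.val_add, Nat.mod_eq_of_lt]
  have hadj := hρ i (x := i + 1) ⟨cycleGraph_adj.2 (by simp), hi _⟩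
    (y := i - 1) ⟨cycleGraph_adj.2 (by simp), hi _⟩ hne
  rw [cycleGraph_adj, htwo, ← neg_sub (i + 1) (i - 1), htwo, neg_eq_iff_add_eq_zero] at hadj
  simp [Fin.ext_iff, Fin.val_add, Nat.mod_eq_of_lt] at hadj

theorem IsPerfectElimination.chordal [LinearOrder α] {ρ : V → α} (hρ : IsPerfectElimination G ρ) :
    Chordal G := by
  intro n hn hcycle
  obtain ⟨φ⟩ := hasInducedCycle_iff_nonempty_embedding.1 hcycle
  exact not_isPerfectElimination_cycleGraph hn _ (hρ.comp_embedding φ)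

theorem IsPerfectElimination.isClique_insert [LE α] {ρ : V → α} (hρ : IsPerfectElimination G ρ)
    (v : V) : G.IsClique (insert v (upperNeighborSet G ρ v)) :=
  (hρ v).insert fun _ hx _ ↦ hx.1

/- The neighbours of an inner vertex of locally minimal rank are adjacent, so a shortest path has no
such vertex: once its rank falls, it never climbs back. -/
theorem IsPerfectElimination.exists_adj_lt [LinearOrder α] {ρ : V → α}
    (hρ : IsPerfectElimination G ρ) {u v : V} (huv : G.Reachable u v) (hlt : ρ u < ρ v) :
    ∃ k, G.Adj u k ∧ ρ u < ρ k ∧ G.dist k v < G.dist u v := by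
  obtain ⟨p, hp⟩ := huv.exists_walk_length_eq_dist
  induction p with
  | nil => exact absurd hlt (lt_irrefl _)
  | @cons u w v huw p ih =>
    rw [Walk.length_cons] at hp
    have hle := dist_le p
    rcases lt_or_ge (ρ u) (ρ w) with h | hwu
    · exact ⟨w, huw, h, by omega⟩
    have hpw : p.length = G.dist w v := by
      have := huw.reachable.dist_triangle_left v
      rw [dist_eq_one_iff_adj.2 huw] at this
      omega
    obtain ⟨k, hwk, hk, hkdist⟩ := ih p.reachable (hwu.trans_lt hlt) hpw
    have hne : u ≠ k := by
      rintro rfl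
      omega
    have huk : G.Adj u k := hρ w ⟨huw.symm, hwu⟩ ⟨hwk, hk.le⟩ hne
    have := huk.reachable.dist_triangle_left v
    rw [dist_eq_one_iff_adj.2 huk] at this
    omega

/-- The disk of radius `r` centred at `v`. -/
def disk (G : SimpleGraph V) (v : V) (r : ℕ) : Set V :=
  {u | G.dist u v ≤ r}

theorem mem_disk {u v : V} {r : ℕ} : u ∈ disk G v r ↔ G.dist u v ≤ r :=
  Iff.rfl

theorem mem_disk_self (v : V) (r : ℕ) : v ∈ disk G v r := by
  simp [mem_disk]

theorem dist_add_dist_le_length_of_mem_support {u v x : V} (p : G.Walk u v) (hx : x ∈ p.support) :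
    G.dist u x + G.dist x v ≤ p.length := by
  classical
  rw [← p.take_spec hx, Walk.length_append]
  exact add_le_add (dist_le _) (dist_le _)

theorem connected_induce_disk (hG : G.Connected) (v : V) (r : ℕ) :
    (G.induce (disk G v r)).Connected := by
  refine induce_connected_of_patches v (mem_disk_self v r) fun {t} ht ↦ ?_
  obtain ⟨p, hp⟩ := hG.exists_walk_length_eq_dist t v
  refine ⟨{x | x ∈ p.support}, fun x hx ↦ ?_, p.end_mem_support, p.start_mem_support,
    p.connected_induce_support _ _⟩
  have := dist_add_dist_le_length_of_mem_support p hx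
  rw [mem_disk] at ht ⊢
  omega

theorem connected_induce_disk_union_disk (hG : G.Connected) {u v : V} {a b : ℕ}
    (huv : G.dist u v ≤ a + b + 1) :
    (G.induce (disk G u a ∪ disk G v b)).Connected := by
  obtain ⟨p, hp⟩ := hG.exists_walk_length_eq_dist u v
  have hsupport : {x | x ∈ p.support} ⊆ disk G u a ∪ disk G v b := fun x hx ↦ by
    have := dist_add_dist_le_length_of_mem_support p hx
    rw [Set.mem_union, mem_disk, mem_disk, G.dist_comm]
    omega
  have := induce_union_connected
    (induce_union_connected
      (connected_induce_disk hG u a).preconnected p.connected_induce_support.preconnected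
      ⟨u, mem_disk_self u a, p.start_mem_support⟩).preconnected
    (connected_induce_disk hG v b).preconnected ⟨v, Or.inr p.end_mem_support, mem_disk_self v b⟩
  rwa [Set.union_right_comm, Set.union_eq_left.2 hsupport] at this

/-- `m` is a pivot of the disks `disk G v (r v)` with respect to the ranking `ρ`: it is a latest
vertex of one of them, and each of them has a vertex at least as late. A vertex `x` of the host
graph takes its rank from a pivot of the disks of radii `r v = d(x, v)`. -/
def IsPivot [LE α] (G : SimpleGraph V) (ρ : V → α) (r : V → ℕ) (m : V) : Prop :=
  (∃ u, m ∈ disk G u (r u) ∧ ∀ t ∈ disk G u (r u), ρ t ≤ ρ m) ∧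
    ∀ v, ∃ t ∈ disk G v (r v), ρ m ≤ ρ t

theorem exists_isPivot [Finite V] [Nonempty V] [LinearOrder α] (G : SimpleGraph V) (ρ : V → α)
    (r : V → ℕ) : ∃ m, IsPivot G ρ r m := by
  have hlatest (v : V) : ∃ m ∈ disk G v (r v), ∀ t ∈ disk G v (r v), ρ t ≤ ρ m :=
    (disk G v (r v)).exists_max_image ρ (Set.toFinite _) ⟨v, mem_disk_self _ _⟩
  choose latest hmem hmax using hlatest
  obtain ⟨u, hu⟩ := Finite.exists_min (ρ ∘ latest)
  exact ⟨latest u, ⟨u, hmem u, hmax u⟩, fun v ↦ ⟨latest v, hmem v, hu v⟩⟩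

/- If `disk G v n` reaches higher than `m`, then inside the connected union of both disks `m` has a
neighbour of higher rank, which must lie in `disk G v n`. -/
theorem IsPerfectElimination.disk_inter_insert_upperNeighborSet_nonempty [LinearOrder α]
    {ρ : V → α} (hρ : IsPerfectElimination G ρ) (hinj : Function.Injective ρ) (hG : G.Connected)
    {u v m : V} {r n : ℕ} (hmu : m ∈ disk G u r) (hmax : ∀ t ∈ disk G u r, ρ t ≤ ρ m)
    (huv : G.dist u v ≤ r + n + 1) (hn : ∃ t ∈ disk G v n, ρ m ≤ ρ t) :
    (disk G v n ∩ insert m (upperNeighborSet G ρ m)).Nonempty := by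
  obtain ⟨t, ht, hle⟩ := hn
  rcases hle.eq_or_lt with heq | hlt
  · exact ⟨m, hinj heq ▸ ht, Set.mem_insert _ _⟩
  let T : Set V := disk G u r ∪ disk G v n
  have hT : (G.induce T).Connected := connected_induce_disk_union_disk hG huv
  obtain ⟨⟨k, hkT⟩, hmk, hlt', -⟩ := (hρ.comp_embedding (Embedding.induce T)).exists_adj_lt
    (hT ⟨m, .inl hmu⟩ ⟨t, .inr ht⟩) hlt
  have hku : k ∉ disk G u r := fun hk ↦ (hmax k hk).not_gt hlt'
  exact ⟨k, hkT.resolve_left hku, .inr ⟨hmk, hlt'.le⟩⟩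

theorem exists_peripheral_mem_interval [Finite V] (H : SimpleGraph V) (x y : V) :
    ∃ z, Peripheral H z ∧ y ∈ interval H x z := by
  obtain ⟨z, hz, hmax⟩ := (Set.toFinite {z | y ∈ interval H x z}).exists_maximalFor (interval H x)
    _ ⟨y, by simp [interval]⟩
  exact ⟨z, ⟨x, fun w _ hlt ↦ hlt.not_subset (hmax (hlt.subset hz) hlt.subset)⟩, hz⟩

theorem exists_peripheral_dist_eq [Finite V] (H : SimpleGraph V) (y z : V) :
    ∃ p q, Peripheral H p ∧ Peripheral H q ∧ H.dist p y + H.dist y z + H.dist z q = H.dist p q := by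
  obtain ⟨q, hq, hzq⟩ := exists_peripheral_mem_interval H y z
  obtain ⟨p, hp, hyp⟩ := exists_peripheral_mem_interval H q y
  refine ⟨p, q, hp, hq, ?_⟩
  change H.dist y z + H.dist z q = H.dist y q at hzq
  change H.dist q y + H.dist y p = H.dist q p at hyp
  rw [H.dist_comm (u := q) (v := y)] at hyp
  rw [H.dist_comm (u := p) (v := y), H.dist_comm (u := p) (v := q)]
  omega

theorem connected_of_dist_eq {H : SimpleGraph V} {s : Set V} [Nonempty s] {G : SimpleGraph s}
    (hH : H.Connected) (hiso : ∀ a b : s, G.dist a b = H.dist a b) : G.Connected where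
  preconnected a b := by
    rcases eq_or_ne a b with rfl | hab
    · rfl
    · refine Reachable.of_dist_ne_zero ?_
      rw [hiso]
      exact (hH.pos_dist_of_ne (Subtype.coe_ne_coe.2 hab)).ne'

theorem dist_le_one_of_isClique_of_disk_inter_nonempty [Finite V] {H : SimpleGraph V} {s : Set V}
    {G : SimpleGraph s} (hH : H.Connected) (hiso : ∀ a b : s, G.dist a b = H.dist a b)
    (hperi : ∀ v : V, Peripheral H v → v ∈ s) {K : Set s} (hK : G.IsClique K) {y z : V}
    (hy : ∀ v : s, (disk G v (H.dist y v) ∩ K).Nonempty)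
    (hz : ∀ v : s, (disk G v (H.dist z v) ∩ K).Nonempty) : H.dist y z ≤ 1 := by
  obtain ⟨p, q, hp, hq, hpq⟩ := exists_peripheral_dist_eq H y z
  obtain ⟨k, hkp, hk⟩ := hy ⟨p, hperi p hp⟩
  obtain ⟨l, hlq, hl⟩ := hz ⟨q, hperi q hq⟩
  have hkl : G.dist k l ≤ 1 := by
    rcases eq_or_ne k l with rfl | hne
    · simp
    · exact (dist_eq_one_iff_adj.2 (hK hk hl hne)).le
  rw [mem_disk, hiso] at hkp hlq
  rw [hiso] at hkl
  have hdist : H.dist p q ≤ H.dist p y + 1 + H.dist z q :=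
    calc H.dist p q ≤ H.dist p k + (H.dist k l + H.dist l q) :=
          hH.dist_triangle.trans (Nat.add_le_add_left hH.dist_triangle _)
      _ = H.dist k p + H.dist k l + H.dist l q := by rw [H.dist_comm (u := p), add_assoc]
      _ ≤ H.dist y p + 1 + H.dist z q := by gcongr
      _ = H.dist p y + 1 + H.dist z q := by rw [H.dist_comm (u := y)]
  omega

theorem isPerfectElimination_comp_of_isPivot [Finite V] [LinearOrder α] {H : SimpleGraph V}
    {s : Set V} {G : SimpleGraph s} (hH : H.Connected) (hiso : ∀ a b : s, G.dist a b = H.dist a b)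
    (hperi : ∀ v : V, Peripheral H v → v ∈ s) {ρ : s → α} (hρ : IsPerfectElimination G ρ)
    (hinj : Function.Injective ρ) {m : V → s} (hm : ∀ x, IsPivot G ρ (fun v ↦ H.dist x v) (m x)) :
    IsPerfectElimination H (ρ ∘ m) := by
  intro x y hy z hz hyz
  have : Nonempty s := ⟨m x⟩
  have hG : G.Connected := connected_of_dist_eq hH hiso
  obtain ⟨⟨u, hmu, hmax⟩, -⟩ := hm x
  have hmeet {w : V} (hw : w ∈ upperNeighborSet H (ρ ∘ m) x) (v : s) :
      (disk G v (H.dist w v) ∩ insert (m x) (upperNeighborSet G ρ (m x))).Nonempty := by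
    have huv : G.dist u v ≤ H.dist x u + H.dist w v + 1 :=
      calc G.dist u v = H.dist u v := hiso u v
        _ ≤ H.dist u x + (H.dist x w + H.dist w v) :=
          hH.dist_triangle.trans (Nat.add_le_add_left hH.dist_triangle _)
        _ = H.dist x u + H.dist w v + 1 := by
          rw [dist_eq_one_iff_adj.2 hw.1, H.dist_comm]
          omega
    obtain ⟨t, ht, hle⟩ := (hm w).2 v
    exact hρ.disk_inter_insert_upperNeighborSet_nonempty hinj hG hmu hmax huv
      ⟨t, ht, hw.2.trans hle⟩
  have hle : H.dist y z ≤ 1 := dist_le_one_of_isClique_of_disk_inter_nonempty hH hiso hperi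
    (hρ.isClique_insert (m x)) (hmeet hy) (hmeet hz)
  exact dist_eq_one_iff_adj.1 (hle.antisymm (hH.pos_dist_of_ne hyz))

end

theorem chordal_host_of_chordal_general {V : Type*} [Finite V] (H : SimpleGraph V) (s : Set V)
    (G : SimpleGraph s) (hHconn : H.Connected) (hiso : ∀ a b : s, G.dist a b = H.dist a b)
    (hperi : ∀ v : V, Peripheral H v → v ∈ s) (hchordal : Chordal G) : Chordal H := by
  obtain ⟨v⟩ := hHconn.nonempty
  obtain ⟨p, hp, -⟩ := exists_peripheral_mem_interval H v v
  have : Nonempty s := ⟨p, hperi p hp⟩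
  obtain ⟨ρ, hinj, hρ⟩ := hchordal.exists_isPerfectElimination
  choose m hm using fun x ↦ exists_isPivot G ρ (fun v ↦ H.dist x v)
  exact (isPerfectElimination_comp_of_isPivot hHconn hiso hperi hρ hinj hm).chordal

/-- If `G` is chordal and `H` is a Helly graph containing `G` as an isometric subgraph in
which all peripheral vertices are real (e.g. `H = 𝓗(G)`), then `H` is chordal. -/
theorem chordal_host_of_chordal
    {V : Type*} [Fintype V] (H : SimpleGraph V) (s : Set V) (G : SimpleGraph s)
    (hGconn : G.Connected) (hHconn : H.Connected)
    (hsub : ∀ a b : s, G.Adj a b → H.Adj a b)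
    (hiso : ∀ a b : s, G.dist a b = H.dist a b)
    (hperi : ∀ v : V, Peripheral H v → v ∈ s)
    (hHelly : HellyGraph H)
    (hchordal : Chordal G) :
    Chordal H := by
  exact chordal_host_of_chordal_general H s G hHconn hiso hperi hchordal
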